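/- arXiv:math/0302115 — 4 statements merged into one kernel-verified Lean document; each statement's English description precedes it below -/
import Mathlib

section
/- For every real ρ with −2 < ρ ≤ −2/3 and every real β > 0, setting η := (ρ+2)(3ρ+10)/32, ρ* := −4/3 − ρ, and d := 1 + (3/4)(ρ+2), one has σ̄(8/3, ρ*, β) + (2 − d) = (1/4)·( √(24β + (3 − √(1+24η))²) + (3 − √(1+24η)) ). This identifies the hiding exponent σ(η hides β) in the regime η ≤ 1/3. -/
/-- `σ̄(κ,ρ,α) = √(4α/κ + ((ρ+2)/κ − 1/2)²) − ((ρ+2)/κ − 1/2)` -/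
noncomputable def sigmaBar (κ ρ α : ℝ) : ℝ :=
  Real.sqrt (4 * α / κ + ((ρ + 2) / κ - 1 / 2) ^ 2) - ((ρ + 2) / κ - 1 / 2)

theorem stmt_5 (ρ β : ℝ) (h1 : -2 < ρ) (h2 : ρ ≤ -2 / 3) (hβ : 0 < β) :
    sigmaBar (8 / 3) (-4 / 3 - ρ) β + (2 - (1 + (3 / 4) * (ρ + 2))) =
      (1 / 4) * (Real.sqrt (24 * β +
          (3 - Real.sqrt (1 + 24 * ((ρ + 2) * (3 * ρ + 10) / 32))) ^ 2)
        + (3 - Real.sqrt (1 + 24 * ((ρ + 2) * (3 * ρ + 10) / 32)))) := by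
  have e1 : Real.sqrt (1 + 24 * ((ρ + 2) * (3 * ρ + 10) / 32)) = 3 * ρ / 2 + 4 := by
    rw [show 1 + 24 * ((ρ + 2) * (3 * ρ + 10) / 32) = (3 * ρ / 2 + 4) ^ 2 by ring]
    exact Real.sqrt_sq (by linarith)
  have e2 : Real.sqrt (24 * β + (3 - (3 * ρ / 2 + 4)) ^ 2) =
      4 * Real.sqrt (4 * β / (8 / 3) + ((-4 / 3 - ρ + 2) / (8 / 3) - 1 / 2) ^ 2) := by
    rw [show 24 * β + (3 - (3 * ρ / 2 + 4)) ^ 2 =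
      4 ^ 2 * (4 * β / (8 / 3) + ((-4 / 3 - ρ + 2) / (8 / 3) - 1 / 2) ^ 2) by ring,
      Real.sqrt_mul (by norm_num), Real.sqrt_sq (by norm_num)]
  rw [e1, e2, sigmaBar]
  ring
end

section
/- For every real η > 5/8 and every real β ≥ 5/8, set E := √(1+24η), α := ((E−3)² − 1)/24 (so that ξ̃(5/8, α) = η), and σ := (1/4)·( √(24β + (√(1+24α) − 3)²) − (√(1+24α) − 3) ). Then ξ̃(5/8, σ + β + α) − η − β = ( √(24β + (E−6)²) − (E−6) )/2. This is the closed form of the two-sided hiding exponent τ(η hides β). -/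
/-- `ξ̃(u,α) = ((√(24u+1) + √(24α+1) − 1)² − 1)/24` -/
noncomputable def xiTilde (u α : ℝ) : ℝ :=
  ((Real.sqrt (24 * u + 1) + Real.sqrt (24 * α + 1) - 1) ^ 2 - 1) / 24

theorem stmt_13 (η β : ℝ) (hη : 5 / 8 < η) (hβ : 5 / 8 ≤ β) :
    xiTilde (5 / 8)
        ((1 / 4) * (Real.sqrt (24 * β +
            (Real.sqrt (1 + 24 * (((Real.sqrt (1 + 24 * η) - 3) ^ 2 - 1) / 24)) - 3) ^ 2)
          - (Real.sqrt (1 + 24 * (((Real.sqrt (1 + 24 * η) - 3) ^ 2 - 1) / 24)) - 3))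
          + β + ((Real.sqrt (1 + 24 * η) - 3) ^ 2 - 1) / 24)
      - η - β
    = (Real.sqrt (24 * β + (Real.sqrt (1 + 24 * η) - 6) ^ 2)
        - (Real.sqrt (1 + 24 * η) - 6)) / 2 := by 
  have hE2 : Real.sqrt (1 + 24 * η) ^ 2 = 1 + 24 * η := Real.sq_sqrt (by linarith)
  have hE : 4 ≤ Real.sqrt (1 + 24 * η) := Real.le_sqrt_of_sq_le (by linarith)
  set E := Real.sqrt (1 + 24 * η) with hEdef
  have h1 : Real.sqrt (1 + 24 * (((E - 3) ^ 2 - 1) / 24)) = E - 3 := by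
    rw [show 1 + 24 * (((E - 3) ^ 2 - 1) / 24) = (E - 3) ^ 2 by ring]
    exact Real.sqrt_sq (by linarith)
  rw [h1, show E - 3 - 3 = E - 6 by ring]
  have hS2 : Real.sqrt (24 * β + (E - 6) ^ 2) ^ 2 = 24 * β + (E - 6) ^ 2 :=
    Real.sq_sqrt (by nlinarith [sq_nonneg (E - 6)])
  have hS : 0 ≤ Real.sqrt (24 * β + (E - 6) ^ 2) := Real.sqrt_nonneg _
  set S := Real.sqrt (24 * β + (E - 6) ^ 2) with hSdef
  unfold xiTilde
  have h2 : Real.sqrt (24 * (5 / 8) + 1) = 4 := by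
    rw [show (24 * (5 / 8) + 1 : ℝ) = 4 ^ 2 by norm_num]
    exact Real.sqrt_sq (by norm_num)
  have h3 : Real.sqrt (24 * (1 / 4 * (S - (E - 6)) + β + ((E - 3) ^ 2 - 1) / 24) + 1) = S + 3 := by
    rw [show 24 * (1 / 4 * (S - (E - 6)) + β + ((E - 3) ^ 2 - 1) / 24) + 1 = (S + 3) ^ 2 by
      linear_combination -hS2]
    exact Real.sqrt_sq (by linarith)
  rw [h2, h3]
  linear_combination hS2 / 24 - hE2 / 24 * (-1)
end

section
/- For every real ρ with −2 < ρ < −2/3, setting η := ξ̃(5/8, η̄(8/3, ρ)), one has ξ̃(5/8, η̄(8/3, −4/3 − ρ)) = η + 6 − √(1+24η). This identifies the exponent of a two-sided restriction measure of exponent η conditioned to have no cut point as η' = η + δ(η) with δ(η) = 6 − √(1+24η). -/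
/-- `η̄(κ,ρ) = (ρ+2)(ρ+6−κ)/(4κ)` -/
noncomputable def etaBar (κ ρ : ℝ) : ℝ := (ρ + 2) * (ρ + 6 - κ) / (4 * κ)

theorem stmt_15 (ρ : ℝ) (h1 : -2 < ρ) (h2 : ρ < -2 / 3) :
    xiTilde (5 / 8) (etaBar (8 / 3) (-4 / 3 - ρ)) =
      xiTilde (5 / 8) (etaBar (8 / 3) ρ) + 6 -
        Real.sqrt (1 + 24 * xiTilde (5 / 8) (etaBar (8 / 3) ρ)) := by 
  have hx : ∀ r : ℝ, -8 / 3 < r →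
      xiTilde (5 / 8) (etaBar (8 / 3) r) = (((3 * r + 14) / 2) ^ 2 - 1) / 24 := by
    intro r hr
    have e1 : Real.sqrt (24 * (5 / 8) + 1) = 4 := by
      rw [show (24 * (5 / 8) + 1 : ℝ) = 4 ^ 2 by norm_num]
      exact Real.sqrt_sq (by norm_num)
    have e2 : Real.sqrt (24 * etaBar (8 / 3) r + 1) = (3 * r + 8) / 2 := by
      rw [show 24 * etaBar (8 / 3) r + 1 = ((3 * r + 8) / 2) ^ 2 by
        unfold etaBar; ring]
      exact Real.sqrt_sq (by linarith)
    unfold xiTilde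
    rw [e1, e2]
    ring
  rw [hx ρ (by linarith), hx (-4 / 3 - ρ) (by linarith),
    show 1 + 24 * ((((3 * ρ + 14) / 2) ^ 2 - 1) / 24) = ((3 * ρ + 14) / 2) ^ 2 by ring,
    Real.sqrt_sq (by linarith)]
  ring
end

section
/- For every real η > 5/8 and every real β > 5/8, set E := √(1+24η), B := √(1+24β), α := ((E−3)² − 1)/24 (so that ξ̃(5/8, α) = η), and σ' := (1/4)·( √(24α + (B−3)²) − (B−3) ). Then ξ̃(5/8, σ' + α + β) − η − β = ( 9 − B − E + 2·√((B−3)² + (E−3)² − 1) )/4. In particular, for η = β = 1 this mixed two-sided hiding exponent τ̂(1,1) equals (2√7 − 1)/4. -/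
theorem stmt_17 (η β : ℝ) (hη : 5 / 8 < η) (hβ : 5 / 8 < β) :
    (xiTilde (5 / 8)
        ((1 / 4) * (Real.sqrt (24 * (((Real.sqrt (1 + 24 * η) - 3) ^ 2 - 1) / 24)
              + (Real.sqrt (1 + 24 * β) - 3) ^ 2)
            - (Real.sqrt (1 + 24 * β) - 3))
          + ((Real.sqrt (1 + 24 * η) - 3) ^ 2 - 1) / 24 + β)
        - η - β
      = (9 - Real.sqrt (1 + 24 * β) - Real.sqrt (1 + 24 * η)
          + 2 * Real.sqrt ((Real.sqrt (1 + 24 * β) - 3) ^ 2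
              + (Real.sqrt (1 + 24 * η) - 3) ^ 2 - 1)) / 4) ∧
    (9 - Real.sqrt (1 + 24 * (1 : ℝ)) - Real.sqrt (1 + 24 * (1 : ℝ))
        + 2 * Real.sqrt ((Real.sqrt (1 + 24 * (1 : ℝ)) - 3) ^ 2
            + (Real.sqrt (1 + 24 * (1 : ℝ)) - 3) ^ 2 - 1)) / 4
      = (2 * Real.sqrt 7 - 1) / 4 := by
  have h25 : Real.sqrt (1 + 24 * (1 : ℝ)) = 5 := by
    rw [show (1 + 24 * (1 : ℝ)) = 5 ^ 2 by norm_num]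
    exact Real.sqrt_sq (by norm_num)
  constructor
  · have hE2 : Real.sqrt (1 + 24 * η) ^ 2 = 1 + 24 * η := Real.sq_sqrt (by linarith)
    have hB2 : Real.sqrt (1 + 24 * β) ^ 2 = 1 + 24 * β := Real.sq_sqrt (by linarith)
    have hE4 : 4 < Real.sqrt (1 + 24 * η) := Real.lt_sqrt_of_sq_lt (by linarith)
    set E := Real.sqrt (1 + 24 * η)
    set B := Real.sqrt (1 + 24 * β)
    have h16 : Real.sqrt (24 * (5 / 8 : ℝ) + 1) = 4 := by
      rw [show (24 * (5 / 8 : ℝ) + 1) = 4 ^ 2 by norm_num]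
      exact Real.sqrt_sq (by norm_num)
    rw [show 24 * (((E - 3) ^ 2 - 1) / 24) + (B - 3) ^ 2 = (B - 3) ^ 2 + (E - 3) ^ 2 - 1 by ring]
    have hS2 : Real.sqrt ((B - 3) ^ 2 + (E - 3) ^ 2 - 1) ^ 2 = (B - 3) ^ 2 + (E - 3) ^ 2 - 1 :=
      Real.sq_sqrt (by nlinarith [sq_nonneg (B - 3)])
    have hS0 := Real.sqrt_nonneg ((B - 3) ^ 2 + (E - 3) ^ 2 - 1)
    set S := Real.sqrt ((B - 3) ^ 2 + (E - 3) ^ 2 - 1)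
    have hx : Real.sqrt (24 * ((1 / 4) * (S - (B - 3)) + ((E - 3) ^ 2 - 1) / 24 + β) + 1)
        = S + 3 := by
      rw [show 24 * ((1 / 4) * (S - (B - 3)) + ((E - 3) ^ 2 - 1) / 24 + β) + 1 = (S + 3) ^ 2 by
        linarith]
      exact Real.sqrt_sq (by linarith)
    unfold xiTilde
    rw [h16, hx]
    linarith
  · rw [h25]
    norm_num
    ring
end
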